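/- arXiv:2605.13077 — 4 statements merged into one kernel-verified Lean document; each statement's English description precedes it below -/
import Mathlib

section
/- For every coalitional value function v : Finset Ag → ℝ on a nonempty finite set of agents Ag with |Ag| = n, the Shapley values sum to the attributable value: Σ_{i ∈ Ag} Sh_i(v) = v(Ag) − v(∅). (Efficiency of the Shapley-based responsibility allocation.) -/
open Finset

/-- The Shapley value of agent `i` with respect to the coalitional value function `v`:
`Sh_i(v) = Σ_{J ⊆ Ag \ {i}} (|J|! · (n − |J| − 1)! / n!) · (v(J ∪ {i}) − v(J))`. -/
noncomputable def shapley {Ag : Type*} [Fintype Ag] [DecidableEq Ag]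
    (v : Finset Ag → ℝ) (i : Ag) : ℝ :=
  ∑ J ∈ ((Finset.univ : Finset Ag).erase i).powerset,
    ((J.card.factorial * (Fintype.card Ag - J.card - 1).factorial : ℝ) /
      (Fintype.card Ag).factorial) * (v (insert i J) - v J)

/-- Efficiency: the Shapley values sum to the attributable value `v(Ag) − v(∅)`. -/
theorem shapley_efficiency {Ag : Type*} [Fintype Ag] [DecidableEq Ag] [Nonempty Ag]
    (v : Finset Ag → ℝ) :
    ∑ i : Ag, shapley v i = v Finset.univ - v ∅ := by
  classical
  set n := Fintype.card Ag with hn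
  have hnpos : 0 < n := Fintype.card_pos
  have hn0 : (n.factorial : ℝ) ≠ 0 := by positivity
  let w : ℕ → ℝ := fun k => ((k.factorial * (n - k - 1).factorial : ℝ) / n.factorial)
  let c : ℕ → ℝ := fun k => ((k.factorial * (n - k).factorial : ℝ) / n.factorial)
  have e1 : ∀ i : Ag, shapley v i =
      (∑ K : Finset Ag, if i ∈ K then w (K.card - 1) * v K else 0)
        - ∑ K : Finset Ag, if i ∈ K then 0 else w K.card * v K := by
    intro i
    have h1 : (∑ J ∈ ((Finset.univ : Finset Ag).erase i).powerset, w J.card * v (insert i J))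
        = ∑ K : Finset Ag, if i ∈ K then w (K.card - 1) * v K else 0 := by
      rw [← Finset.sum_filter]
      refine Finset.sum_bij' (fun J _ => insert i J) (fun K _ => K.erase i) ?_ ?_ ?_ ?_ ?_
      · intro J _
        simp
      · intro K _
        simp only [Finset.mem_powerset]
        exact Finset.erase_subset_erase _ (Finset.subset_univ _)
      · intro J hJ
        have : i ∉ J := fun h => by simpa using (Finset.mem_powerset.1 hJ) h
        exact Finset.erase_insert this
      · intro K hK
        exact Finset.insert_erase (by simpa using hK)
      · intro J hJ
        have : i ∉ J := fun h => by simpa using (Finset.mem_powerset.1 hJ) h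
        rw [Finset.card_insert_of_notMem this]
        simp
    have h2 : (∑ J ∈ ((Finset.univ : Finset Ag).erase i).powerset, w J.card * v J)
        = ∑ K : Finset Ag, if i ∈ K then 0 else w K.card * v K := by
      have : ((Finset.univ : Finset Ag).erase i).powerset
          = Finset.univ.filter (fun K : Finset Ag => i ∉ K) := by
        ext K
        simp [Finset.subset_erase]
      rw [this, Finset.sum_filter]
      refine Finset.sum_congr rfl fun K _ => ?_
      by_cases h : i ∈ K <;> simp [h]
    rw [← h1, ← h2, ← Finset.sum_sub_distrib]
    unfold shapley
    refine Finset.sum_congr rfl fun J _ => ?_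
    simp only [w, ← hn]
    ring
  have e2 : ∀ K : Finset Ag, (∑ i : Ag, if i ∈ K then w (K.card - 1) * v K else 0)
      = c K.card * v K - if K = ∅ then v ∅ else 0 := by
    intro K
    rw [← Finset.sum_filter, Finset.sum_const, nsmul_eq_mul]
    have hf : (Finset.univ.filter (fun i : Ag => i ∈ K)) = K := by ext; simp
    rw [hf]
    by_cases h : K = ∅
    · subst h
      simp [c, hn0]
    · obtain ⟨m, hm⟩ := Nat.exists_eq_succ_of_ne_zero (Finset.card_ne_zero.2
        (Finset.nonempty_iff_ne_empty.2 h))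
      rw [if_neg h, hm]
      have : n - m - 1 = n - (m + 1) := by omega
      simp only [w, c, Nat.succ_eq_add_one, Nat.add_sub_cancel, this, Nat.factorial_succ]
      push_cast
      ring
  have e3 : ∀ K : Finset Ag, (∑ i : Ag, if i ∈ K then 0 else w K.card * v K)
      = c K.card * v K - if K = Finset.univ then v Finset.univ else 0 := by
    intro K
    have hf : (∑ i : Ag, if i ∈ K then 0 else w K.card * v K)
        = ∑ i ∈ Kᶜ, w K.card * v K := by
      rw [← Finset.sum_filter_add_sum_filter_not Finset.univ (fun i => i ∈ K)]
      rw [Finset.sum_eq_zero (by intro x hx; simp at hx; simp [hx]), zero_add]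
      have : (Finset.univ.filter (fun i : Ag => ¬ i ∈ K)) = Kᶜ := by ext; simp
      rw [this]
      exact Finset.sum_congr rfl fun i hi => if_neg (Finset.mem_compl.1 hi)
    rw [hf, Finset.sum_const, nsmul_eq_mul, Finset.card_compl, ← hn]
    by_cases h : K = Finset.univ
    · subst h
      simp [c, Finset.card_univ, ← hn, hn0]
    · have hlt : K.card < n := (Finset.card_lt_iff_ne_univ K).2 h
      obtain ⟨m, hm⟩ := Nat.exists_eq_succ_of_ne_zero (show n - K.card ≠ 0 by omega)
      rw [if_neg h]
      simp only [w, c, hm, Nat.succ_eq_add_one, Nat.add_sub_cancel, Nat.factorial_succ]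
      push_cast
      ring
  simp_rw [e1]
  rw [Finset.sum_sub_distrib, Finset.sum_comm, Finset.sum_comm
    (f := fun (i : Ag) (K : Finset Ag) => if i ∈ K then 0 else w K.card * v K)]
  simp_rw [e2, e3]
  rw [Finset.sum_sub_distrib, Finset.sum_sub_distrib]
  simp
end

section
/- For every coalitional value function v : Finset Ag → ℝ on a nonempty finite set of agents Ag with |Ag| = n, and any two distinct agents i, j ∈ Ag, if v(J ∪ {i}) = v(J ∪ {j}) for every subset J ⊆ Ag \ {i, j}, then Sh_i(v) = Sh_j(v). (Symmetry: two agents with identical contributions receive equal degrees of responsibility.) -/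
open Finset

/-- Symmetry: two agents with identical contributions receive equal Shapley values. -/
theorem shapley_symmetry {Ag : Type*} [Fintype Ag] [DecidableEq Ag] [Nonempty Ag]
    (v : Finset Ag → ℝ) (i j : Ag) (hij : i ≠ j)
    (hsym : ∀ J ⊆ ((Finset.univ : Finset Ag).erase i).erase j,
      v (insert i J) = v (insert j J)) :
    shapley v i = shapley v j := by
  set S := ((Finset.univ : Finset Ag).erase i).erase j with hS
  have hi : i ∉ S := by simp [hS]
  have hj : j ∉ S := by simp [hS]
  have h1 : (Finset.univ : Finset Ag).erase i = insert j S := by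
    rw [hS, Finset.insert_erase]
    simp [hij.symm]
  have h2 : (Finset.univ : Finset Ag).erase j = insert i S := by
    rw [hS, Finset.erase_right_comm, Finset.insert_erase]
    simp [hij]
  unfold shapley
  rw [h1, h2, Finset.sum_powerset_insert hj, Finset.sum_powerset_insert hi]
  congr 1
  · refine Finset.sum_congr rfl fun J hJ => ?_
    rw [hsym J (Finset.mem_powerset.1 hJ)]
  · refine Finset.sum_congr rfl fun J hJ => ?_
    have hJS := Finset.mem_powerset.1 hJ
    rw [hsym J hJS, Finset.insert_comm i j J,
      Finset.card_insert_of_notMem (fun h => hi (hJS h)),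
      Finset.card_insert_of_notMem (fun h => hj (hJS h))]
end

section
/- Let Ag be a finite set with |Ag| = n, let v : Finset Ag → ℝ, and let i, j ∈ Ag be distinct agents such that v(J ∪ {i}) = v(J ∪ {j}) for every J ⊆ Ag \ {i, j}. For a bijection π : Ag → Fin n, let f(π) = π ∘ (swap i j) be the ordering obtained from π by exchanging the positions of i and j. Then for every bijection π : Ag → Fin n, v(P_i(π) ∪ {i}) − v(P_i(π)) = v(P_j(f(π)) ∪ {j}) − v(P_j(f(π))), where P_k(π) = { l ∈ Ag : π(l) < π(k) }. -/
open Finset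

/-- `P_k(π)`: the set of agents ordered strictly before `k` by the ordering `π`. -/
def preds {Ag : Type*} [Fintype Ag] [DecidableEq Ag]
    (π : Ag ≃ Fin (Fintype.card Ag)) (k : Ag) : Finset Ag :=
  Finset.univ.filter (fun l => π l < π k)

/-- For symmetric agents `i` and `j`, the marginal contribution of `i` under an
ordering `π` equals the marginal contribution of `j` under the ordering
`f(π) = π ∘ (swap i j)` obtained by exchanging the positions of `i` and `j`. -/
theorem swap_marginal_contribution {Ag : Type*} [Fintype Ag] [DecidableEq Ag]
    (v : Finset Ag → ℝ) (i j : Ag) (hij : i ≠ j)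
    (hsym : ∀ J ⊆ ((Finset.univ : Finset Ag).erase i).erase j,
      v (insert i J) = v (insert j J))
    (π : Ag ≃ Fin (Fintype.card Ag)) :
    v (insert i (preds π i)) - v (preds π i)
      = v (insert j (preds ((Equiv.swap i j).trans π) j))
        - v (preds ((Equiv.swap i j).trans π) j) := by
  have hsub : (preds π i).erase j ⊆ ((Finset.univ : Finset Ag).erase i).erase j := by
    intro l hl
    simp only [preds, mem_erase, mem_filter, mem_univ, true_and, and_true] at hl ⊢
    refine ⟨hl.1, ?_⟩
    rintro rfl
    exact lt_irrefl _ hl.2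
  have key := hsym _ hsub
  by_cases h : π j < π i
  · have h1 : preds π i = insert j ((preds π i).erase j) := by
      rw [insert_erase]
      simp [preds, h]
    have h2 : preds ((Equiv.swap i j).trans π) j = insert i ((preds π i).erase j) := by
      ext l
      by_cases hli : l = i
      · subst hli
        simp [preds, h]
      · by_cases hlj : l = j
        · subst hlj
          simp [preds, hli]
        · simp [preds, hli, hlj, Equiv.swap_apply_of_ne_of_ne hli hlj]
    rw [h2, key, insert_comm j i, ← h1]
  · have h1 : (preds π i).erase j = preds π i := by
      rw [erase_eq_of_notMem]
      simpa [preds] using h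
    have h2 : preds ((Equiv.swap i j).trans π) j = preds π i := by
      ext l
      by_cases hli : l = i
      · subst hli
        simpa [preds] using h
      · by_cases hlj : l = j
        · subst hlj
          simpa [preds] using h
        · simp [preds, Equiv.swap_apply_of_ne_of_ne hli hlj]
    rw [h1] at key
    rw [h2, key]
end

section
/- Let Ag be a nonempty finite set of agents with |Ag| = n and let v : Finset Ag → ℝ be a coalitional value function. Then Σ_{J ⊆ Ag} (Σ_{i ∈ Ag \ J} (v(J ∪ {i}) − v(J)) · (|J|! · (n − |J| − 1)! / n!)) = v(Ag) − v(∅), where the outer sum ranges over all subsets J of Ag (with the inner sum empty when J = Ag). (The sum-exchange identity underlying the efficiency proof, obtained after swapping the order of summation over agents and coalitions.) -/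
open Finset

lemma shapley_aux_swap {Ag : Type*} [Fintype Ag] [DecidableEq Ag]
    (v : Finset Ag → ℝ) (w : ℕ → ℝ) :
    ∑ J : Finset Ag, ∑ i ∈ (Finset.univ : Finset Ag) \ J, v (insert i J) * w J.card
      = ∑ K : Finset Ag, ∑ _i ∈ K, v K * w (K.card - 1) := by
  rw [Finset.sum_sigma', Finset.sum_sigma']
  refine Finset.sum_bij' (fun x _ => ⟨insert x.2 x.1, x.2⟩) (fun x _ => ⟨x.1.erase x.2, x.2⟩)
    ?_ ?_ ?_ ?_ ?_
  · rintro ⟨J, i⟩ h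
    simp
  · rintro ⟨J, i⟩ h
    simp
  · rintro ⟨J, i⟩ h
    have h' : i ∉ J := by simpa using h
    simp [Finset.erase_insert h']
  · rintro ⟨J, i⟩ h
    have h' : i ∈ J := by simpa using h
    simp [Finset.insert_erase h']
  · rintro ⟨J, i⟩ h
    have h' : i ∉ J := by simpa using h
    simp [Finset.card_insert_of_notMem h']

lemma shapley_aux_left (n k : ℕ) (hk : k ≠ 0) (hkn : k ≤ n) :
    (k : ℝ) * (((k - 1).factorial * (n - (k - 1) - 1).factorial : ℝ) / n.factorial)
      = (k.factorial * (n - k).factorial : ℝ) / n.factorial := by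
  obtain ⟨m, rfl⟩ := Nat.exists_eq_succ_of_ne_zero hk
  have : n - (m.succ - 1) - 1 = n - m.succ := by omega
  rw [this, Nat.factorial_succ]
  simp only [Nat.succ_sub_one]
  push_cast
  ring

lemma shapley_aux_right (n k : ℕ) (hkn : k < n) :
    ((n - k : ℕ) : ℝ) * ((k.factorial * (n - k - 1).factorial : ℝ) / n.factorial)
      = (k.factorial * (n - k).factorial : ℝ) / n.factorial := by
  obtain ⟨m, hm⟩ := Nat.exists_eq_succ_of_ne_zero (show n - k ≠ 0 by omega)
  rw [hm, Nat.factorial_succ]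
  simp only [Nat.succ_sub_one]
  push_cast
  ring

/-- The sum-exchange identity underlying the efficiency proof of the Shapley-based
responsibility allocation. -/
theorem shapley_sum_exchange {Ag : Type*} [Fintype Ag] [DecidableEq Ag] [Nonempty Ag]
    (v : Finset Ag → ℝ) :
    ∑ J ∈ (Finset.univ : Finset Ag).powerset,
      (∑ i ∈ (Finset.univ : Finset Ag) \ J, (v (insert i J) - v J)) *
        ((J.card.factorial * (Fintype.card Ag - J.card - 1).factorial : ℝ) /
          (Fintype.card Ag).factorial)
      = v Finset.univ - v ∅ := by
  have hn : 0 < Fintype.card Ag := Fintype.card_pos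
  have hne : (Finset.univ : Finset Ag) ≠ ∅ := Finset.univ_nonempty.ne_empty
  have hf : ((Fintype.card Ag).factorial : ℝ) ≠ 0 := by positivity
  have key := shapley_aux_swap v (fun k =>
    ((k.factorial * (Fintype.card Ag - k - 1).factorial : ℝ) / (Fintype.card Ag).factorial))
  simp only [Finset.powerset_univ, Finset.sum_mul, sub_mul, Finset.sum_sub_distrib]
  rw [key, ← Finset.sum_sub_distrib]
  have : v Finset.univ - v ∅ = ∑ K : Finset Ag,
      ((if K = Finset.univ then v K else 0) - (if K = ∅ then v K else 0)) := by
    simp [Finset.sum_sub_distrib]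
  rw [this]
  refine Finset.sum_congr rfl fun K _ => ?_
  simp only [Finset.sum_const, nsmul_eq_mul, Finset.card_univ_sdiff]
  rw [mul_left_comm, mul_left_comm ((Fintype.card Ag - K.card : ℕ) : ℝ)]
  have hle : K.card ≤ Fintype.card Ag := Finset.card_le_univ K
  by_cases h0 : K = ∅
  · subst h0
    have hr := shapley_aux_right (Fintype.card Ag) 0 hn
    rw [Finset.card_empty, hr]
    simp [hne.symm, hf]
  · have hk : K.card ≠ 0 := by simpa using h0
    rw [shapley_aux_left _ _ hk hle]
    by_cases h1 : K = Finset.univ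
    · subst h1
      rw [if_neg h0]
      simp [hf]
    · have hlt : K.card < Fintype.card Ag := (Finset.card_lt_iff_ne_univ K).2 h1
      rw [shapley_aux_right _ _ hlt]
      simp [h0, h1]
end
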